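/- Let ρ0 ∈ (0,1) and let t ∈ (0, min(2^{−1/ρ0}, e^{−7/2})]. Then the function ρ ↦ E_ρ(−t^ρ) is strictly monotonically increasing on [ρ0, 1]; that is, for all ρ1, ρ2 with ρ0 ≤ ρ1 < ρ2 ≤ 1 one has E_{ρ1}(−t^{ρ1}) < E_{ρ2}(−t^{ρ2}). -/

import Mathlib

open Real Filter Topology

/-- The two-parameter Mittag-Leffler function `E_{ρ,μ}(z)` (real version). -/
noncomputable def mittagLeffler (ρ μ z : ℝ) : ℝ := ∑' k : ℕ, z ^ k / Real.Gamma (ρ * k + μ)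

/-!
Put `w s = t ^ s / Γ (s + 1)`, so that `E_ρ(-t ^ ρ) = ∑ (-1) ^ k w (k ρ)`. Applying `-ρ d/dρ`
termwise replaces `w` by `D s = -s w' s = s (ψ (s + 1) - log t) w s`, where `ψ` is the digamma
function. Since `w` is log-concave, its quotients `w (s + ρ) / w s` are controlled by `ψ`, and for
`t ^ ρ ≤ 1 / 2` and `log t ≤ -7 / 2` this gives `D (s + ρ) ≤ D s` whenever `s ≥ 3 ρ`. The pairs of
terms of indices `(5, 6)`, `(7, 8)`, … are therefore nonincreasing in `ρ` in absolute value. The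
first pair alone can fail to have this property: as `ρ → 0` with `t ^ ρ = 1 / 2`, the quotient
`D (2 ρ) / D ρ` tends to `1` from above. The indices `1` to `4` are thus taken together, where the
positive contribution of the second pair compensates for it.
-/

/-- The digamma function on the real line, the real counterpart of `Complex.digamma`. -/
noncomputable def digamma (x : ℝ) : ℝ := logDeriv Gamma x

section Digamma

variable {a b x y : ℝ}

lemma hasDerivAt_log_Gamma (hx : 0 < x) : HasDerivAt (log ∘ Gamma) (digamma x) x := by
  have hGamma : DifferentiableAt ℝ Gamma x :=
    differentiableAt_Gamma fun m => by linarith [m.cast_nonneg (α := ℝ)]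
  exact hGamma.hasDerivAt.log (Gamma_pos_of_pos hx).ne'

lemma sub_mul_digamma_le_log_Gamma_sub (hx : 0 < x) (hy : 0 < y) :
    (y - x) * digamma x ≤ log (Gamma y) - log (Gamma x) := by
  rcases lt_trichotomy x y with hxy | rfl | hyx
  · have h := convexOn_log_Gamma.le_slope_of_hasDerivAt hx hy hxy (hasDerivAt_log_Gamma hx)
    rwa [slope_def_field, le_div_iff₀' (sub_pos.2 hxy)] at h
  · simp
  · have h := convexOn_log_Gamma.slope_le_of_hasDerivAt hy hx hyx (hasDerivAt_log_Gamma hx)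
    rw [slope_def_field, div_le_iff₀' (sub_pos.2 hyx)] at h
    simp only [Function.comp_apply] at h
    linarith

lemma monotoneOn_digamma : MonotoneOn digamma (Set.Ioi 0) := by
  intro x (hx : 0 < x) y (hy : 0 < y) hxy
  rcases hxy.eq_or_lt with rfl | hlt
  · rfl
  · refine le_of_mul_le_mul_left ?_ (sub_pos.2 hlt)
    linarith [sub_mul_digamma_le_log_Gamma_sub hx hy, sub_mul_digamma_le_log_Gamma_sub hy hx]

lemma log_Gamma_add_one (hx : 0 < x) : log (Gamma (x + 1)) = log (Gamma x) + log x := by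
  rw [Gamma_add_one hx.ne', log_mul hx.ne' (Gamma_pos_of_pos hx).ne', add_comm]

lemma digamma_add_one (hx : 0 < x) : digamma (x + 1) = digamma x + 1 / x := by
  have hshift : HasDerivAt (fun y => log (Gamma (y + 1))) (digamma (x + 1)) x :=
    (hasDerivAt_log_Gamma (by positivity)).comp_add_const x 1
  have hadd : HasDerivAt (fun y => log (Gamma y) + log y) (digamma x + x⁻¹) x :=
    (hasDerivAt_log_Gamma hx).add (hasDerivAt_log hx.ne')
  rw [one_div]
  refine hshift.unique (hadd.congr_of_eventuallyEq ?_)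
  filter_upwards [lt_mem_nhds hx] with y hy using log_Gamma_add_one hy

lemma digamma_one : digamma 1 = -eulerMascheroniConstant := by
  rw [digamma, logDeriv_apply, hasDerivAt_Gamma_one.deriv, Gamma_one, div_one]

lemma digamma_two : digamma 2 = 1 - eulerMascheroniConstant := by
  rw [← one_add_one_eq_two, digamma_add_one one_pos, digamma_one]
  ring

lemma digamma_le_log (hx : 0 < x) : digamma x ≤ log x := by
  have h := sub_mul_digamma_le_log_Gamma_sub hx (by positivity : 0 < x + 1)
  rw [log_Gamma_add_one hx] at h
  linarith

lemma log_sub_inv_le_digamma (hx : 0 < x) : log x - 1 / x ≤ digamma x := by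
  have h := sub_mul_digamma_le_log_Gamma_sub (by positivity : 0 < x + 1) hx
  rw [log_Gamma_add_one hx, digamma_add_one hx] at h
  linarith

lemma tendsto_digamma_sub_log : Tendsto (fun x => digamma x - log x) atTop (𝓝 0) := by
  have hinv : Tendsto (fun x : ℝ => -(1 / x)) atTop (𝓝 0) := by
    simpa using (tendsto_inv_atTop_zero (𝕜 := ℝ)).neg
  refine tendsto_of_tendsto_of_tendsto_of_le_of_le' hinv tendsto_const_nhds ?_ ?_
  · filter_upwards [eventually_gt_atTop 0] with x hx
    linarith [log_sub_inv_le_digamma hx]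
  · filter_upwards [eventually_gt_atTop 0] with x hx
    linarith [digamma_le_log hx]

lemma tendsto_digamma : Tendsto digamma atTop atTop :=
  (tendsto_digamma_sub_log.add_atTop tendsto_log_atTop).congr fun _ => sub_add_cancel _ _

lemma tendsto_digamma_add_sub_digamma (y : ℝ) :
    Tendsto (fun x => digamma (x + y) - digamma x) atTop (𝓝 0) := by
  have hshift := tendsto_digamma_sub_log.comp (tendsto_atTop_add_const_right atTop y tendsto_id)
  have h := (hshift.sub tendsto_digamma_sub_log).add (tendsto_log_comp_add_sub_log y)
  simp only [sub_zero, add_zero] at h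
  exact h.congr fun x => by simp only [Function.comp_apply, id_eq]; ring

lemma digamma_add_natCast (hx : 0 < x) (n : ℕ) :
    digamma (x + n) = digamma x + ∑ k ∈ Finset.range n, 1 / (x + k) := by
  induction n with
  | zero => simp
  | succ n ih =>
    rw [Nat.cast_succ, ← add_assoc, digamma_add_one (by positivity), ih, Finset.sum_range_succ,
      add_assoc]

lemma hasSum_digamma_sub (ha : 0 < a) (hab : a ≤ b) :
    HasSum (fun n : ℕ => (b - a) / ((a + n) * (b + n))) (digamma b - digamma a) := by
  have hb : 0 < b := ha.trans_le hab
  rw [hasSum_iff_tendsto_nat_of_nonneg fun n => div_nonneg (sub_nonneg.2 hab) (by positivity)]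
  have htail : Tendsto (fun n : ℕ => digamma (b + n) - digamma (a + n)) atTop (𝓝 0) := by
    have h := (tendsto_digamma_add_sub_digamma (b - a)).comp
      (tendsto_atTop_add_const_left atTop a tendsto_natCast_atTop_atTop)
    refine h.congr fun n => ?_
    simp only [Function.comp_apply, add_sub_cancel, add_right_comm a]
  have hlim := htail.const_sub (digamma b - digamma a)
  rw [sub_zero] at hlim
  refine hlim.congr fun n => ?_
  rw [digamma_add_natCast ha, digamma_add_natCast hb, ← sub_eq_zero]
  have hterm (k : ℕ) : (b - a) / ((a + k) * (b + k)) = 1 / (a + k) - 1 / (b + k) := by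
    field_simp
    ring
  simp only [hterm, Finset.sum_sub_distrib]
  ring

/- Both bounds compare `hasSum_digamma_sub` termwise with a multiple of the same series for
arguments differing by one, whose sum is known from `digamma_add_one`. -/
lemma digamma_sub_le (ha : 1 / 2 < a) (hab : a ≤ b) :
    digamma b - digamma a ≤ (b - a) / (a - 1 / 2) := by
  have ha' : 0 < a - 1 / 2 := sub_pos.2 ha
  have hunit := (hasSum_digamma_sub ha' (le_add_of_nonneg_right zero_le_one)).mul_left (b - a)
  rw [digamma_add_one ha', add_sub_cancel_left, add_sub_cancel_left, mul_one_div] at hunit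
  refine hasSum_le (fun n => ?_) (hasSum_digamma_sub (by linarith) hab) hunit
  rw [mul_one_div]
  exact div_le_div_of_nonneg_left (sub_nonneg.2 hab) (by positivity)
    (by nlinarith [n.cast_nonneg (α := ℝ)])

lemma le_digamma_sub (ha : 0 < a) (hab : a ≤ b) (hba : b ≤ a + 1) :
    (b - a) / a ≤ digamma b - digamma a := by
  have hunit := (hasSum_digamma_sub ha (le_add_of_nonneg_right zero_le_one)).mul_left (b - a)
  rw [digamma_add_one ha, add_sub_cancel_left, add_sub_cancel_left, mul_one_div] at hunit
  refine hasSum_le (fun n => ?_) hunit (hasSum_digamma_sub ha hab)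
  have hb : 0 < b := ha.trans_le hab
  rw [mul_one_div]
  exact div_le_div_of_nonneg_left (sub_nonneg.2 hab) (by positivity) (by gcongr)

lemma digamma_sub_eq (ha : 0 < a) (hb : 0 < b) :
    digamma b - digamma a = (b - a) / (a * b) + (digamma (b + 1) - digamma (a + 1)) := by
  rw [digamma_add_one ha, digamma_add_one hb]
  field_simp
  ring

lemma digamma_sub_le_add (ha : 0 < a) (hab : a ≤ b) :
    digamma b - digamma a ≤ (b - a) * (1 / (a * b) + 1 / (a + 1 / 2)) := by
  have h := digamma_sub_le (by linarith : 1 / 2 < a + 1) (by linarith : a + 1 ≤ b + 1)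
  rw [digamma_sub_eq ha (ha.trans_le hab), mul_add, mul_one_div, mul_one_div]
  convert add_le_add_right h _ using 3 <;> ring

lemma neg_two_thirds_lt_digamma (hx : 1 ≤ x) : -(2 / 3) < digamma x := by
  have h := monotoneOn_digamma (Set.mem_Ioi.2 one_pos) (Set.mem_Ioi.2 (by linarith)) hx
  rw [digamma_one] at h
  linarith [eulerMascheroniConstant_lt_two_thirds]

lemma le_digamma_add_one (hx : 0 ≤ x) (hx1 : x ≤ 1) :
    x / 2 + x / (x + 1) - 2 / 3 ≤ digamma (x + 1) := by
  have h := le_digamma_sub two_pos (by linarith : (2 : ℝ) ≤ x + 2) (by linarith)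
  have hstep := digamma_add_one (by positivity : 0 < x + 1)
  rw [add_assoc, one_add_one_eq_two] at hstep
  rw [add_sub_cancel_right, digamma_two, hstep] at h
  have hdiv : x / (x + 1) = 1 - 1 / (x + 1) := by
    field_simp
    ring
  linarith [eulerMascheroniConstant_lt_two_thirds]

end Digamma

/-- The absolute value `t ^ s / Γ(s + 1)` of the terms of `E_ρ(-t ^ ρ)`, at `s = ρ k`, as a
function of a real exponent `s`. -/
noncomputable def gammaWeight (t s : ℝ) : ℝ := t ^ s / Gamma (s + 1)

/-- The logarithmic decay rate of `gammaWeight t` at `s`, that is, minus its logarithmic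
derivative. -/
noncomputable def decayRate (t s : ℝ) : ℝ := digamma (s + 1) - log t

/-- Minus the Euler derivative `s * d/ds` of `gammaWeight t`. -/
noncomputable def scaledDecay (t s : ℝ) : ℝ := s * decayRate t s * gammaWeight t s

section GammaWeight

variable {t ρ r s : ℝ}

lemma gammaWeight_pos (ht : 0 < t) (hs : -1 < s) : 0 < gammaWeight t s :=
  div_pos (rpow_pos_of_pos ht s) (Gamma_pos_of_pos (by linarith))

lemma gammaWeight_zero : gammaWeight t 0 = 1 := by
  rw [gammaWeight, rpow_zero, zero_add, Gamma_one, div_one]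

lemma hasDerivAt_gammaWeight (ht : 0 < t) (hs : -1 < s) :
    HasDerivAt (gammaWeight t) (-(decayRate t s * gammaWeight t s)) s := by
  have hs' : 0 < s + 1 := by linarith
  have hGamma : HasDerivAt (fun r => Gamma (r + 1)) (deriv Gamma (s + 1)) s :=
    HasDerivAt.comp_add_const s 1
      (differentiableAt_Gamma fun m => by linarith [m.cast_nonneg (α := ℝ)]).hasDerivAt
  have hne : Gamma (s + 1) ≠ 0 := (Gamma_pos_of_pos hs').ne'
  refine ((hasStrictDerivAt_const_rpow ht s).hasDerivAt.div hGamma hne).congr_deriv ?_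
  rw [decayRate, gammaWeight, digamma, logDeriv_apply]
  field_simp
  ring

/-- The tangent line inequality for the concave function `log ∘ gammaWeight t`. -/
lemma gammaWeight_le_exp_mul (ht : 0 < t) (hs : -1 < s) (hr : -1 < r) :
    gammaWeight t r ≤ exp (-((r - s) * decayRate t s)) * gammaWeight t s := by
  have hlog {q : ℝ} (hq : -1 < q) : gammaWeight t q = exp (log t * q - log (Gamma (q + 1))) := by
    rw [exp_sub, exp_log (Gamma_pos_of_pos (by linarith)), ← rpow_def_of_pos ht, gammaWeight]
  rw [hlog hs, hlog hr, ← exp_add, exp_le_exp, decayRate]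
  linarith [sub_mul_digamma_le_log_Gamma_sub (by linarith : 0 < s + 1) (by linarith : 0 < r + 1)]

lemma exp_neg_mul_decayRate (ht : 0 < t) :
    exp (-(ρ * decayRate t s)) = t ^ ρ * exp (-(ρ * digamma (s + 1))) := by
  rw [rpow_def_of_pos ht, ← exp_add, decayRate]
  ring_nf

lemma exp_neg_mul_decayRate_le {c : ℝ} (ht : 0 < t) (hc : 0 < c)
    (h : 1 / c ≤ 1 + ρ * digamma (s + 1)) : exp (-(ρ * decayRate t s)) ≤ c * t ^ ρ := by
  have hexp : exp (-(ρ * digamma (s + 1))) ≤ c := by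
    rw [exp_neg, inv_le_comm₀ (exp_pos _) hc, ← one_div]
    linarith [add_one_le_exp (ρ * digamma (s + 1))]
  rw [exp_neg_mul_decayRate ht, mul_comm]
  gcongr

lemma le_exp_neg_mul_decayRate {c : ℝ} (ht : 0 < t) (h : ρ * digamma (s + 1) ≤ 1 - c) :
    c * t ^ ρ ≤ exp (-(ρ * decayRate t s)) := by
  have hexp : c ≤ exp (-(ρ * digamma (s + 1))) := by
    linarith [add_one_le_exp (-(ρ * digamma (s + 1)))]
  rw [exp_neg_mul_decayRate ht, mul_comm]
  gcongr

lemma decayRate_le_decayRate (hr : -1 < r) (hrs : r ≤ s) : decayRate t r ≤ decayRate t s := by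
  have h := monotoneOn_digamma (Set.mem_Ioi.2 (by linarith : 0 < r + 1))
    (Set.mem_Ioi.2 (by linarith : 0 < s + 1)) (by linarith)
  rw [decayRate, decayRate]
  linarith

lemma tendsto_decayRate (t : ℝ) : Tendsto (decayRate t) atTop atTop :=
  tendsto_atTop_add_const_right atTop (-log t)
    (tendsto_digamma.comp (tendsto_atTop_add_const_right atTop 1 tendsto_id))

lemma lt_decayRate (hlog : log t ≤ -(7 / 2)) (hs : 0 ≤ s) : 17 / 6 < decayRate t s := by
  rw [decayRate]
  linarith [neg_two_thirds_lt_digamma (by linarith : 1 ≤ s + 1)]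

lemma decayRate_add_le (hs : -1 < s) (hρ : 0 ≤ ρ) :
    decayRate t (s + ρ) ≤
      decayRate t s + ρ * (1 / ((s + 1) * (s + ρ + 1)) + 1 / (s + 3 / 2)) := by
  have h := digamma_sub_le_add (by linarith : 0 < s + 1) (by linarith : s + 1 ≤ s + ρ + 1)
  rw [show s + ρ + 1 - (s + 1) = ρ by ring, show s + 1 + 1 / 2 = s + 3 / 2 by ring] at h
  rw [decayRate, decayRate]
  linarith

lemma scaledDecay_pos (ht : 0 < t) (hlog : log t ≤ -(7 / 2)) (hs : 0 < s) :
    0 < scaledDecay t s := by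
  have hd : 0 < decayRate t s := by linarith [lt_decayRate hlog hs.le]
  have hg := gammaWeight_pos ht (by linarith : -1 < s)
  rw [scaledDecay]
  positivity

lemma scaledDecay_add_le_mul {m q e : ℝ} (ht : 0 < t) (hs : 0 ≤ s) (hρ : 0 ≤ ρ)
    (hd : 0 ≤ decayRate t s) (hm : s + ρ ≤ m * s) (hq : decayRate t (s + ρ) ≤ q * decayRate t s)
    (he : exp (-(ρ * decayRate t s)) ≤ e) :
    scaledDecay t (s + ρ) ≤ m * q * e * scaledDecay t s := by
  have hd' := hd.trans (decayRate_le_decayRate (by linarith) (le_add_of_nonneg_right hρ))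
  have hg := gammaWeight_pos ht (by linarith : -1 < s)
  have hg' := gammaWeight_pos ht (by linarith : -1 < s + ρ)
  have hdecay := gammaWeight_le_exp_mul ht (by linarith : -1 < s) (by linarith : -1 < s + ρ)
  rw [add_sub_cancel_left] at hdecay
  calc scaledDecay t (s + ρ)
      = (s + ρ) * decayRate t (s + ρ) * gammaWeight t (s + ρ) := rfl
    _ ≤ (m * s) * (q * decayRate t s) * (e * gammaWeight t s) := by
        gcongr
        · exact mul_nonneg (by linarith) (by linarith)
        · linarith
        · exact hdecay.trans (by gcongr)
    _ = m * q * e * scaledDecay t s := by rw [scaledDecay]; ring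

lemma scaledDecay_add_le_exp_mul {m δ : ℝ} (ht : 0 < t) (hs : 0 ≤ s) (hρ : 0 ≤ ρ)
    (hd : 0 ≤ decayRate t s) (hm : s + ρ ≤ m * s)
    (hδ : decayRate t (s + ρ) ≤ (1 + δ) * decayRate t s) :
    scaledDecay t (s + ρ) ≤ m * exp (δ - ρ * decayRate t s) * scaledDecay t s := by
  have hrate : decayRate t (s + ρ) ≤ exp δ * decayRate t s :=
    hδ.trans (by gcongr; linarith [add_one_le_exp δ])
  have h := scaledDecay_add_le_mul ht hs hρ hd hm hrate le_rfl
  rwa [mul_assoc m, ← exp_add, ← sub_eq_add_neg] at h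

lemma mul_scaledDecay_le_add {m e : ℝ} (ht : 0 < t) (hs : 0 ≤ s) (hρ : 0 ≤ ρ)
    (hd : 0 ≤ decayRate t s) (hm : m * s ≤ s + ρ) (he₀ : 0 ≤ e)
    (he : e ≤ exp (-(ρ * decayRate t (s + ρ)))) :
    m * e * scaledDecay t s ≤ scaledDecay t (s + ρ) := by
  have hd' := decayRate_le_decayRate (t := t) (by linarith) (le_add_of_nonneg_right hρ : s ≤ s + ρ)
  have hg := gammaWeight_pos ht (by linarith : -1 < s)
  have hdecay := gammaWeight_le_exp_mul ht (by linarith : -1 < s + ρ) (by linarith : -1 < s)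
  rw [sub_add_cancel_left, neg_mul, neg_neg] at hdecay
  have hlower : e * gammaWeight t s ≤ gammaWeight t (s + ρ) := by
    calc e * gammaWeight t s
        ≤ exp (-(ρ * decayRate t (s + ρ))) *
            (exp (ρ * decayRate t (s + ρ)) * gammaWeight t (s + ρ)) := by gcongr
      _ = gammaWeight t (s + ρ) := by rw [← mul_assoc, ← exp_add, neg_add_cancel, exp_zero, one_mul]
  calc m * e * scaledDecay t s = (m * s) * decayRate t s * (e * gammaWeight t s) := by
        rw [scaledDecay]; ring
    _ ≤ (s + ρ) * decayRate t (s + ρ) * gammaWeight t (s + ρ) := by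
        gcongr
        exact mul_nonneg (by linarith) (by linarith)
    _ = scaledDecay t (s + ρ) := rfl

end GammaWeight

section Blocks

variable {t ρ s : ℝ}

lemma decayRate_add_le_mul {c δ : ℝ} (hs : -1 < s) (hρ : 0 ≤ ρ) (hc : c ≤ decayRate t s)
    (hδ : 0 ≤ δ) (h : ρ * (1 / ((s + 1) * (s + ρ + 1)) + 1 / (s + 3 / 2)) ≤ δ * c) :
    decayRate t (s + ρ) ≤ (1 + δ) * decayRate t s := by
  linarith [decayRate_add_le (t := t) hs hρ, mul_le_mul_of_nonneg_left hc hδ]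

lemma scaledDecay_add_le (ht : 0 < t) (hlog : log t ≤ -(7 / 2)) (hρ : 0 < ρ)
    (htρ : t ^ ρ ≤ 1 / 2) (hs : 3 * ρ ≤ s) : scaledDecay t (s + ρ) ≤ scaledDecay t s := by
  have hs₀ : 0 < s := by linarith
  have hd := lt_decayRate hlog hs₀.le
  have hrate : decayRate t (s + ρ) ≤ (1 + 10 / 17 * ρ) * decayRate t s := by
    refine decayRate_add_le_mul (by linarith) hρ.le hd.le (by positivity) ?_
    have h₁ : 1 / ((s + 1) * (s + ρ + 1)) ≤ 1 :=
      div_le_one_of_le₀ (by nlinarith) (by positivity)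
    have h₂ : 1 / (s + 3 / 2) ≤ 2 / 3 := by
      rw [div_le_div_iff₀ (by positivity) (by norm_num)]
      linarith
    nlinarith
  -- Half of `-ρ * log t ≥ 7 / 2 * ρ` absorbs the terms linear in `ρ`, leaving `√(t ^ ρ)`.
  have hhalf : 10 / 17 * ρ - ρ * decayRate t s ≤ ρ * log t / 2 := by
    rw [decayRate]
    nlinarith [neg_two_thirds_lt_digamma (by linarith : 1 ≤ s + 1)]
  have hsqrt : exp (ρ * log t / 2) ≤ 3 / 4 := by
    have hsq : exp (ρ * log t / 2) ^ 2 = t ^ ρ := by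
      rw [← exp_nat_mul, rpow_def_of_pos ht]
      ring_nf
    exact le_of_sq_le_sq (by linarith) (by norm_num)
  calc scaledDecay t (s + ρ)
      ≤ 4 / 3 * exp (10 / 17 * ρ - ρ * decayRate t s) * scaledDecay t s :=
        scaledDecay_add_le_exp_mul ht hs₀.le hρ.le (by linarith) (by linarith) hrate
    _ ≤ scaledDecay t s := by
        refine mul_le_of_le_one_left (scaledDecay_pos ht hlog hs₀).le ?_
        linarith [exp_le_exp.2 hhalf]

lemma scaledDecay_two_mul_lt (ht : 0 < t) (hlog : log t ≤ -(7 / 2)) (hρ : 1 / 4 ≤ ρ) :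
    scaledDecay t (2 * ρ) < scaledDecay t ρ := by
  have hρ₀ : 0 < ρ := by linarith
  have hd : 3.15 ≤ decayRate t ρ := by
    have hψ := le_digamma_add_one (by norm_num : (0 : ℝ) ≤ 1 / 4) (by norm_num)
    have hmono := decayRate_le_decayRate (t := t) (by norm_num : (-1 : ℝ) < 1 / 4) hρ
    rw [decayRate] at hmono
    norm_num at hψ hmono ⊢
    linarith
  have hrate : decayRate t (ρ + ρ) ≤ (1 + 0.37 * ρ) * decayRate t ρ := by
    refine decayRate_add_le_mul (by linarith) hρ₀.le hd (by positivity) ?_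
    have h₁ : 1 / ((ρ + 1) * (ρ + ρ + 1)) ≤ 8 / 15 := by
      rw [div_le_div_iff₀ (by positivity) (by norm_num)]
      nlinarith
    have h₂ : 1 / (ρ + 3 / 2) ≤ 4 / 7 := by
      rw [div_le_div_iff₀ (by positivity) (by norm_num)]
      linarith
    nlinarith
  have hexp : exp (0.37 * ρ - ρ * decayRate t ρ) < 1 / 2 := by
    rw [← lt_log_iff_exp_lt (by norm_num), one_div, log_inv]
    nlinarith [log_two_lt_d9]
  calc scaledDecay t (2 * ρ)
      ≤ 2 * exp (0.37 * ρ - ρ * decayRate t ρ) * scaledDecay t ρ := by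
        rw [two_mul ρ]
        exact scaledDecay_add_le_exp_mul ht hρ₀.le hρ₀.le (by linarith) (by linarith) hrate
    _ < scaledDecay t ρ := by
        refine mul_lt_of_lt_one_left (scaledDecay_pos ht hlog hρ₀) ?_
        linarith

/- The constants in the next three lemmas bound `(k + 1) / k` times the quotients of `decayRate` and
`gammaWeight`: `2.42 = 2 * 1.1 * 1.1`, `1.365 = 3 / 2 * 1 * 0.91`, `1.484 ≥ 4 / 3 * 1.07 * 1.04`. -/
lemma scaledDecay_two_mul_le (ht : 0 < t) (hlog : log t ≤ -(7 / 2)) (hρ : 0 < ρ)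
    (hρ' : ρ ≤ 1 / 4) : scaledDecay t (2 * ρ) ≤ 2.42 * t ^ ρ * scaledDecay t ρ := by
  have hd := lt_decayRate hlog hρ.le
  have hrate : decayRate t (ρ + ρ) ≤ (1 + 0.1) * decayRate t ρ := by
    refine decayRate_add_le_mul (by linarith) hρ.le hd.le (by norm_num) ?_
    have h₁ : ρ * (1 / ((ρ + 1) * (ρ + ρ + 1))) ≤ 2 / 15 := by
      rw [mul_one_div, div_le_iff₀ (by positivity)]
      nlinarith
    have h₂ : ρ * (1 / (ρ + 3 / 2)) ≤ 1 / 7 := by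
      rw [mul_one_div, div_le_iff₀ (by positivity)]
      linarith
    linarith
  have hexp : exp (-(ρ * decayRate t ρ)) ≤ 1.1 * t ^ ρ := by
    have hdiv : 0.8 * ρ ≤ ρ / (ρ + 1) := by
      rw [le_div_iff₀ (by positivity)]
      nlinarith
    have hψ : 1.3 * ρ - 2 / 3 ≤ digamma (ρ + 1) := by
      linarith [le_digamma_add_one hρ.le (by linarith)]
    refine exp_neg_mul_decayRate_le ht (by norm_num) ?_
    nlinarith
  have h := scaledDecay_add_le_mul (m := 2) ht hρ.le hρ.le (by linarith) (by linarith) hrate hexp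
  rw [← two_mul] at h
  linarith

lemma mul_scaledDecay_two_mul_le (ht : 0 < t) (hlog : log t ≤ -(7 / 2)) (hρ : 0 < ρ)
    (hρ' : ρ ≤ 1 / 4) :
    1.365 * t ^ ρ * scaledDecay t (2 * ρ) ≤ scaledDecay t (3 * ρ) := by
  have hd := lt_decayRate hlog (by positivity : 0 ≤ 2 * ρ)
  have hψ : digamma (3 * ρ + 1) ≤ 0.36 := by
    have hmono := monotoneOn_digamma (Set.mem_Ioi.2 (by positivity : 0 < 3 * ρ + 1))
      (Set.mem_Ioi.2 (by norm_num)) (by linarith : 3 * ρ + 1 ≤ 7 / 4)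
    have h := le_digamma_sub (by norm_num : (0 : ℝ) < 7 / 4) (by norm_num : (7 / 4 : ℝ) ≤ 2)
      (by norm_num)
    rw [digamma_two] at h
    linarith [one_half_lt_eulerMascheroniConstant]
  have hsum : 2 * ρ + ρ = 3 * ρ := by ring
  have hexp : 0.91 * t ^ ρ ≤ exp (-(ρ * decayRate t (2 * ρ + ρ))) := by
    rw [hsum]
    exact le_exp_neg_mul_decayRate ht (by nlinarith)
  have h := mul_scaledDecay_le_add (m := 3 / 2) ht (by positivity) hρ.le (by linarith)
    (by linarith) (by positivity) hexp
  rw [hsum] at h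
  linarith

lemma scaledDecay_four_mul_le (ht : 0 < t) (hlog : log t ≤ -(7 / 2)) (hρ : 0 < ρ)
    (hρ' : ρ ≤ 1 / 4) : scaledDecay t (4 * ρ) ≤ 1.484 * t ^ ρ * scaledDecay t (3 * ρ) := by
  have h3ρ : 0 < 3 * ρ := by positivity
  have hd := lt_decayRate hlog h3ρ.le
  have hrate : decayRate t (3 * ρ + ρ) ≤ (1 + 0.07) * decayRate t (3 * ρ) := by
    refine decayRate_add_le_mul (by linarith) hρ.le hd.le (by norm_num) ?_
    have h₁ : ρ * (1 / ((3 * ρ + 1) * (3 * ρ + ρ + 1))) ≤ 1 / 14 := by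
      rw [mul_one_div, div_le_iff₀ (by positivity)]
      nlinarith
    have h₂ : ρ * (1 / (3 * ρ + 3 / 2)) ≤ 1 / 9 := by
      rw [mul_one_div, div_le_iff₀ (by positivity)]
      linarith
    linarith
  have hexp : exp (-(ρ * decayRate t (3 * ρ))) ≤ 1.04 * t ^ ρ := by
    have hdiv : 3 * ρ / 2 ≤ 3 * ρ / (3 * ρ + 1) := by
      gcongr
      linarith
    have hψ : 3 * ρ - 2 / 3 ≤ digamma (3 * ρ + 1) := by
      linarith [le_digamma_add_one h3ρ.le (by linarith)]
    refine exp_neg_mul_decayRate_le ht (by norm_num) ?_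
    nlinarith [sq_nonneg (ρ - 1 / 9)]
  have h := scaledDecay_add_le_mul (m := 4 / 3) ht h3ρ.le hρ.le (by linarith) (by linarith)
    hrate hexp
  have hpos : 0 < t ^ ρ * scaledDecay t (3 * ρ) :=
    mul_pos (rpow_pos_of_pos ht ρ) (scaledDecay_pos ht hlog h3ρ)
  rw [show 3 * ρ + ρ = 4 * ρ by ring] at h
  linarith

lemma scaledDecay_alternating_four_pos (ht : 0 < t) (hlog : log t ≤ -(7 / 2)) (hρ : 0 < ρ)
    (htρ : t ^ ρ ≤ 1 / 2) :
    0 < scaledDecay t ρ - scaledDecay t (2 * ρ) + scaledDecay t (3 * ρ) -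
      scaledDecay t (4 * ρ) := by
  rcases le_total (1 / 4) ρ with hlarge | hsmall
  · have h₁₂ := scaledDecay_two_mul_lt ht hlog hlarge
    have h₃₄ := scaledDecay_add_le ht hlog hρ htρ le_rfl
    rw [show 3 * ρ + ρ = 4 * ρ by ring] at h₃₄
    linarith
  · have hx : 0 < t ^ ρ := rpow_pos_of_pos ht ρ
    have h₂ := scaledDecay_two_mul_le ht hlog hρ hsmall
    have h₃ := mul_scaledDecay_two_mul_le ht hlog hρ hsmall
    have h₄ := scaledDecay_four_mul_le ht hlog hρ hsmall
    have h₀ := scaledDecay_pos ht hlog hρ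
    set x := t ^ ρ
    have hfactor : 2.42 * x * (1 - 1.365 * x * (1 - 1.484 * x)) < 1 := by
      nlinarith [mul_nonneg hx.le (sub_nonneg.2 htρ),
        mul_nonneg (mul_nonneg hx.le hx.le) (sub_nonneg.2 htρ)]
    have h₃₄ : (1 - 1.484 * x) * (1.365 * x * scaledDecay t (2 * ρ)) ≤
        scaledDecay t (3 * ρ) - scaledDecay t (4 * ρ) := by
      have := mul_le_mul_of_nonneg_left h₃ (by linarith : 0 ≤ 1 - 1.484 * x)
      linarith
    have h₁₂ : (1 - 1.365 * x * (1 - 1.484 * x)) * scaledDecay t (2 * ρ) < scaledDecay t ρ := by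
      calc (1 - 1.365 * x * (1 - 1.484 * x)) * scaledDecay t (2 * ρ)
          ≤ (1 - 1.365 * x * (1 - 1.484 * x)) * (2.42 * x * scaledDecay t ρ) := by
            gcongr
            nlinarith
        _ = 2.42 * x * (1 - 1.365 * x * (1 - 1.484 * x)) * scaledDecay t ρ := by ring
        _ < scaledDecay t ρ := mul_lt_of_lt_one_left h₀ hfactor
    linarith

end Blocks

/-- The sum of the terms of indices `1` to `4` of the series of `1 - E_ρ(-t ^ ρ)`, as a function of
`ρ`; they are kept together because the first two alone need not be monotone. -/
noncomputable def leadingBlock (t ρ : ℝ) : ℝ :=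
  gammaWeight t ρ - gammaWeight t (2 * ρ) + gammaWeight t (3 * ρ) - gammaWeight t (4 * ρ)

section Monotonicity

variable {t k ρ ρ₀ : ℝ}

lemma hasDerivAt_gammaWeight_mul (ht : 0 < t) (hk : 0 ≤ k) (hρ : 0 < ρ) :
    HasDerivAt (fun r => gammaWeight t (k * r)) (-(scaledDecay t (k * ρ) / ρ)) ρ := by
  have hkρ : -1 < k * ρ := by linarith [mul_nonneg hk hρ.le]
  refine ((hasDerivAt_gammaWeight ht hkρ).comp ρ (hasDerivAt_const_mul k)).congr_deriv ?_
  rw [scaledDecay]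
  field_simp

lemma antitoneOn_gammaWeight_mul_sub (ht : 0 < t) (hlog : log t ≤ -(7 / 2)) (hρ₀ : 0 < ρ₀)
    (htρ₀ : t ^ ρ₀ ≤ 1 / 2) (hk : 3 ≤ k) :
    AntitoneOn (fun ρ => gammaWeight t (k * ρ) - gammaWeight t ((k + 1) * ρ)) (Set.Ici ρ₀) := by
  have ht1 : t ≤ 1 := (log_nonpos_iff ht.le).1 (by linarith)
  have hderiv {ρ : ℝ} (hρ : ρ₀ ≤ ρ) :
      HasDerivAt (fun r => gammaWeight t (k * r) - gammaWeight t ((k + 1) * r))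
        (-(scaledDecay t (k * ρ) / ρ) - -(scaledDecay t ((k + 1) * ρ) / ρ)) ρ :=
    (hasDerivAt_gammaWeight_mul ht (by linarith) (hρ₀.trans_le hρ)).sub
      (hasDerivAt_gammaWeight_mul ht (by linarith) (hρ₀.trans_le hρ))
  refine antitoneOn_of_hasDerivWithinAt_nonpos (convex_Ici ρ₀)
    (fun ρ hρ => (hderiv hρ).continuousAt.continuousWithinAt)
    (fun ρ hρ => (hderiv (interior_subset hρ)).hasDerivWithinAt) fun ρ hρ => ?_
  have hρ : ρ₀ ≤ ρ := interior_subset hρ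
  have hρ_pos := hρ₀.trans_le hρ
  have htρ := (rpow_le_rpow_of_exponent_ge ht ht1 hρ).trans htρ₀
  have h := scaledDecay_add_le ht hlog hρ_pos htρ (s := k * ρ) (by gcongr)
  rw [← add_one_mul] at h
  have := div_le_div_of_nonneg_right h hρ_pos.le
  linarith

lemma strictAntiOn_leadingBlock (ht : 0 < t) (hlog : log t ≤ -(7 / 2)) (hρ₀ : 0 < ρ₀)
    (htρ₀ : t ^ ρ₀ ≤ 1 / 2) : StrictAntiOn (leadingBlock t) (Set.Ici ρ₀) := by
  have ht1 : t ≤ 1 := (log_nonpos_iff ht.le).1 (by linarith)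
  have hderiv {ρ : ℝ} (hρ : ρ₀ ≤ ρ) : HasDerivAt (leadingBlock t)
      (-((scaledDecay t ρ - scaledDecay t (2 * ρ) + scaledDecay t (3 * ρ) -
        scaledDecay t (4 * ρ)) / ρ)) ρ := by
    have hterm {k : ℝ} (hk : 0 ≤ k) := hasDerivAt_gammaWeight_mul ht hk (hρ₀.trans_le hρ)
    have h₁ := hterm zero_le_one
    simp only [one_mul] at h₁
    refine (((h₁.sub (hterm zero_le_two)).add (hterm zero_le_three)).sub
      (hterm zero_le_four)).congr_deriv ?_
    ring
  refine strictAntiOn_of_hasDerivWithinAt_neg (convex_Ici ρ₀)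
    (fun ρ hρ => (hderiv hρ).continuousAt.continuousWithinAt)
    (fun ρ hρ => (hderiv (interior_subset hρ)).hasDerivWithinAt) fun ρ hρ => ?_
  have hρ : ρ₀ ≤ ρ := interior_subset hρ
  have hρ_pos := hρ₀.trans_le hρ
  have htρ := (rpow_le_rpow_of_exponent_ge ht ht1 hρ).trans htρ₀
  exact neg_neg_of_pos (div_pos (scaledDecay_alternating_four_pos ht hlog hρ_pos htρ) hρ_pos)

end Monotonicity

section Series

variable {t ρ : ℝ}

lemma summable_gammaWeight_natCast_mul (ht : 0 < t) (hρ : 0 < ρ) :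
    Summable fun n : ℕ => gammaWeight t (n * ρ) := by
  obtain ⟨s, hs, hd⟩ : ∃ s, 0 < s ∧ 0 < decayRate t s :=
    ((eventually_gt_atTop 0).and ((tendsto_decayRate t).eventually_gt_atTop 0)).exists
  have hgeom := summable_geometric_of_lt_one (exp_nonneg (-(ρ * decayRate t s)))
    (exp_lt_one_iff.2 (neg_neg_of_pos (mul_pos hρ hd)))
  have hpos (n : ℕ) : -1 < n * ρ := by linarith [mul_nonneg n.cast_nonneg hρ.le]
  refine (hgeom.mul_right (exp (s * decayRate t s) * gammaWeight t s)).of_nonneg_of_le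
    (fun n => (gammaWeight_pos ht (hpos n)).le) fun n => ?_
  have h := gammaWeight_le_exp_mul ht (by linarith : -1 < s) (hpos n)
  rwa [sub_mul, neg_sub, sub_eq_neg_add, exp_add, mul_assoc (n : ℝ), ← mul_neg, exp_nat_mul,
    mul_assoc] at h

lemma mittagLeffler_neg_rpow (ht : 0 ≤ t) :
    mittagLeffler ρ 1 (-(t ^ ρ)) = ∑' n : ℕ, (-1) ^ n * gammaWeight t (n * ρ) := by
  refine tsum_congr fun n => ?_
  rw [gammaWeight, neg_pow, mul_div_assoc, mul_comm (n : ℝ), rpow_mul_natCast ht]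

lemma hasSum_mittagLeffler_neg_rpow (ht : 0 < t) (hρ : 0 < ρ) :
    HasSum (fun n : ℕ => (-1) ^ n * gammaWeight t (n * ρ)) (mittagLeffler ρ 1 (-(t ^ ρ))) := by
  rw [mittagLeffler_neg_rpow ht.le]
  refine (Summable.of_norm ?_).hasSum
  refine (summable_gammaWeight_natCast_mul ht hρ).norm.congr fun n => ?_
  rw [norm_mul, norm_pow, norm_neg, norm_one, one_pow, one_mul]

lemma hasSum_pairs {M : Type*} [AddCommMonoid M] [TopologicalSpace M] [ContinuousAdd M]
    [RegularSpace M] {u : ℕ → M} {a : M} (hu : HasSum u a) :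
    HasSum (fun n => u (2 * n) + u (2 * n + 1)) a := by
  have h := ((Nat.divModEquiv 2).symm.hasSum_iff.2 hu).prod_fiberwise fun n => hasSum_fintype _
  simpa [Fin.sum_univ_two, mul_comm] using h

lemma hasSum_tail_mittagLeffler (ht : 0 < t) (hρ : 0 < ρ) :
    HasSum (fun n : ℕ => gammaWeight t ((2 * n + 5) * ρ) - gammaWeight t ((2 * n + 5 + 1) * ρ))
      (1 - leadingBlock t ρ - mittagLeffler ρ 1 (-(t ^ ρ))) := by
  have hinit : ∑ n ∈ Finset.range 5, (-1) ^ n * gammaWeight t (n * ρ) = 1 - leadingBlock t ρ := by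
    simp only [Finset.sum_range_succ, Finset.sum_range_zero, leadingBlock]
    norm_num [gammaWeight_zero]
    ring
  have h := hasSum_pairs
    ((hasSum_nat_add_iff' 5).2 (hasSum_mittagLeffler_neg_rpow ht hρ))
  rw [hinit] at h
  rw [← neg_sub (mittagLeffler ρ 1 (-(t ^ ρ)))]
  refine h.neg.congr_fun fun n => ?_
  have hodd : (-1 : ℝ) ^ (2 * n + 5) = -1 := Odd.neg_one_pow ⟨n + 2, by ring⟩
  have heven : (-1 : ℝ) ^ (2 * n + 1 + 5) = 1 := Even.neg_one_pow ⟨n + 3, by ring⟩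
  rw [hodd, heven]
  push_cast
  ring_nf

end Series

theorem mittagLeffler_strictMono_general {ρ₀ t : ℝ} (hρ₀ : 0 < ρ₀)
    (ht : t ∈ Set.Ioc 0 (min ((2 : ℝ) ^ (-1 / ρ₀)) (exp (-(7 / 2))))) :
    StrictMonoOn (fun ρ => mittagLeffler ρ 1 (-(t ^ ρ))) (Set.Ici ρ₀) := by
  intro ρ₁ (h₁ : ρ₀ ≤ ρ₁) ρ₂ (h₂ : ρ₀ ≤ ρ₂) h₁₂
  obtain ⟨ht₀, hmin⟩ := ht
  have hlog : log t ≤ -(7 / 2) := (log_le_iff_le_exp ht₀).2 (hmin.trans (min_le_right _ _))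
  have htρ₀ : t ^ ρ₀ ≤ 1 / 2 := by
    calc t ^ ρ₀ ≤ ((2 : ℝ) ^ (-1 / ρ₀)) ^ ρ₀ := by
          gcongr
          exact hmin.trans (min_le_left _ _)
      _ = 1 / 2 := by
          rw [← rpow_mul zero_le_two, div_mul_cancel₀ _ hρ₀.ne', rpow_neg_one, one_div]
  have hblock := strictAntiOn_leadingBlock ht₀ hlog hρ₀ htρ₀ h₁ h₂ h₁₂
  have htail := hasSum_le
    (fun n : ℕ => antitoneOn_gammaWeight_mul_sub ht₀ hlog hρ₀ htρ₀
      (by linarith [n.cast_nonneg (α := ℝ)] : (3 : ℝ) ≤ 2 * n + 5) h₁ h₂ h₁₂.le)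
    (hasSum_tail_mittagLeffler ht₀ (hρ₀.trans_le h₂))
    (hasSum_tail_mittagLeffler ht₀ (hρ₀.trans_le h₁))
  beta_reduce
  linarith

theorem mittagLeffler_strictMono (ρ₀ t : ℝ) (hρ₀ : ρ₀ ∈ Set.Ioo (0:ℝ) 1)
    (ht : t ∈ Set.Ioc 0 (min ((2:ℝ) ^ (-1 / ρ₀)) (Real.exp (-(7/2 : ℝ))))) :
    ∀ ρ₁ ρ₂ : ℝ, ρ₀ ≤ ρ₁ → ρ₁ < ρ₂ → ρ₂ ≤ 1 →
      mittagLeffler ρ₁ 1 (-(t ^ ρ₁)) < mittagLeffler ρ₂ 1 (-(t ^ ρ₂)) :=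
  fun _ _ h₁ h₁₂ _ => mittagLeffler_strictMono_general hρ₀.1 ht h₁ (h₁.trans h₁₂.le) h₁₂
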